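/- Let (0, y*) ∈ D. Then V(0, y*, 0) = 0, and the germ of V at the singular point (0, y*, 0) is C^∞-smoothly orbitally equivalent to the germ at 0 of the vector field ξ̇ = ξ, η̇ = η, ζ̇ = 0 (a bicritical node times a trivial factor). -/

import Mathlib

open Filter Topology

/-- Partial derivative of `g : ℝ² → ℝ` with respect to the first coordinate. -/
noncomputable def d1 (g : ℝ × ℝ → ℝ) (q : ℝ × ℝ) : ℝ := fderiv ℝ g q ((1 : ℝ), (0 : ℝ))

/-- Partial derivative of `g : ℝ² → ℝ` with respect to the second coordinate. -/
noncomputable def d2 (g : ℝ × ℝ → ℝ) (q : ℝ × ℝ) : ℝ := fderiv ℝ g q ((0 : ℝ), (1 : ℝ))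

/-- Two vector fields `V`, `N` with marked points `x₀`, `y₀` are `C^∞`-smoothly orbitally
equivalent (as germs) if there are open neighborhoods `U ∋ x₀`, `U' ∋ y₀` with `U`
contained in the domain `Dom`, a `C^∞` diffeomorphism `Φ : U → U'` with `Φ x₀ = y₀`, and
a `C^∞` nowhere-vanishing function `h : U → ℝ` with `DΦ(x)·V(x) = h(x)·N(Φ(x))` on `U`. -/
def OrbEquiv {E : Type*} [NormedAddCommGroup E] [NormedSpace ℝ E]
    (Dom : Set E) (V N : E → E) (x₀ y₀ : E) : Prop :=
  ∃ (U U' : Set E) (Φ Ψ : E → E) (h : E → ℝ),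
    IsOpen U ∧ IsOpen U' ∧ x₀ ∈ U ∧ y₀ ∈ U' ∧ U ⊆ Dom ∧
    ContDiffOn ℝ (⊤ : ℕ∞) Φ U ∧ ContDiffOn ℝ (⊤ : ℕ∞) Ψ U' ∧
    Φ x₀ = y₀ ∧ Set.MapsTo Φ U U' ∧ Set.MapsTo Ψ U' U ∧
    (∀ x ∈ U, Ψ (Φ x) = x) ∧ (∀ y ∈ U', Φ (Ψ y) = y) ∧
    ContDiffOn ℝ (⊤ : ℕ∞) h U ∧ (∀ x ∈ U, h x ≠ 0) ∧
    ∀ x ∈ U, fderiv ℝ Φ x (V x) = h x • N (Φ x)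

open scoped unitInterval ContDiff

section Superposition

variable {K : Type*} [TopologicalSpace K] [CompactSpace K]

/-- Pointwise application of a continuous family of operators to a continuous family of vectors. -/
noncomputable def pointwiseApply (K : Type*) [TopologicalSpace K] [CompactSpace K]
    (E F : Type*) [NormedAddCommGroup E] [NormedSpace ℝ E]
    [NormedAddCommGroup F] [NormedSpace ℝ F] :
    C(K, E →L[ℝ] F) →L[ℝ] C(K, E) →L[ℝ] C(K, F) :=
  LinearMap.mkContinuous₂
    (LinearMap.mk₂ ℝ
      (fun (A : C(K, E →L[ℝ] F)) (g : C(K, E)) =>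
        (⟨fun s => A s (g s), A.continuous.clm_apply g.continuous⟩ : C(K, F)))
      (fun _ _ _ => by ext; simp) (fun _ _ _ => by ext; simp)
      (fun _ _ _ => by ext; simp) (fun _ _ _ => by ext; simp))
    1 (fun A g => by
      rw [one_mul, ContinuousMap.norm_le _ (by positivity)]
      intro s
      exact ((A s).le_opNorm (g s)).trans
        (mul_le_mul (A.norm_coe_le_norm s) (g.norm_coe_le_norm s) (norm_nonneg _)
          (norm_nonneg A)))

theorem pointwiseApply_apply {E F : Type*} [NormedAddCommGroup E] [NormedSpace ℝ E]
    [NormedAddCommGroup F] [NormedSpace ℝ F] (A : C(K, E →L[ℝ] F)) (g : C(K, E)) (s : K) :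
    pointwiseApply K E F A g s = A s (g s) := rfl

theorem hasFDerivAt_superposition {E F : Type*} [NormedAddCommGroup E] [NormedSpace ℝ E]
    [NormedAddCommGroup F] [NormedSpace ℝ F] {f : E → F} {f' : E → E →L[ℝ] F}
    (hf : ∀ x, HasFDerivAt f (f' x) x) (hfc : Continuous f) (hf' : Continuous f') (γ : C(K, E)) :
    HasFDerivAt (fun g : C(K, E) => (⟨f, hfc⟩ : C(E, F)).comp g)
      (pointwiseApply K E F ((⟨f', hf'⟩ : C(E, E →L[ℝ] F)).comp γ)) γ := by
  rw [hasFDerivAt_iff_isLittleO, Asymptotics.isLittleO_iff]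
  intro ε hε
  have hcont := (ContinuousMap.continuous_postcomp (X := K)
    (⟨f', hf'⟩ : C(E, E →L[ℝ] F))).continuousAt (x := γ)
  obtain ⟨δ, hδ, hδε⟩ := Metric.continuousAt_iff (α := C(K, E)) (β := C(K, E →L[ℝ] F)) |>.1 hcont ε hε
  filter_upwards [Metric.ball_mem_nhds γ hδ] with g hg
  rw [ContinuousMap.norm_le _ (by positivity)]
  intro s
  have hseg : ∀ x ∈ segment ℝ (γ s) (g s), ‖f' x - f' (γ s)‖ ≤ ε := by
    rintro _ ⟨a, b, ha, hb, hab, rfl⟩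
    have hmem : a • γ + b • g ∈ Metric.ball γ δ :=
      convex_ball γ δ (Metric.mem_ball_self hδ) hg ha hb hab
    have h := (ContinuousMap.dist_apply_le_dist s).trans (hδε hmem).le
    rwa [dist_eq_norm] at h
  have h := Convex.norm_image_sub_le_of_norm_hasFDerivWithin_le'
    (fun x _ => (hf x).hasFDerivWithinAt) hseg (convex_segment _ _)
    (left_mem_segment ℝ _ _) (right_mem_segment ℝ _ _)
  exact h.trans (mul_le_mul_of_nonneg_left ((g - γ).norm_coe_le_norm s) hε.le)

theorem contDiff_superposition {E F : Type} [NormedAddCommGroup E] [NormedSpace ℝ E]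
    [NormedAddCommGroup F] [NormedSpace ℝ F] {f : E → F} (hf : ContDiff ℝ ∞ f) :
    ContDiff ℝ ∞ (fun g : C(K, E) => (⟨f, hf.continuous⟩ : C(E, F)).comp g) := by
  refine contDiff_infty.2 fun n => ?_
  induction n generalizing F with
  | zero => exact contDiff_zero.2 (ContinuousMap.continuous_postcomp _)
  | succ n ih =>
    have hf' : ContDiff ℝ ∞ (fderiv ℝ f) := hf.fderiv_right (by simp)
    refine contDiff_succ_iff_hasFDerivAt.2
      ⟨_, (pointwiseApply K E F).contDiff.comp (ih hf'), fun γ => ?_⟩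
    exact hasFDerivAt_superposition
      (fun x => (hf.differentiable (by simp) x).hasFDerivAt) hf.continuous hf'.continuous γ

end Superposition

section InverseFunction

variable {X Y : Type*} [NormedAddCommGroup X] [NormedSpace ℝ X] [CompleteSpace X]
  [NormedAddCommGroup Y] [NormedSpace ℝ Y]

/-- The smooth inverse function theorem, with the local inverse smooth on its whole domain. -/
theorem exists_openPartialHomeomorph_contDiffOn_symm {G : X → Y} {S : Set X} (hS : IsOpen S)
    (hG : ContDiffOn ℝ ∞ G S) {a : X} (ha : a ∈ S) {G' : X ≃L[ℝ] Y}
    (hG' : HasFDerivAt G (G' : X →L[ℝ] Y) a) :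
    ∃ e : OpenPartialHomeomorph X Y, a ∈ e.source ∧ e.source ⊆ S ∧ (e : X → Y) = G ∧
      ContDiffOn ℝ ∞ e.symm e.target := by
  have hGat : ∀ x ∈ S, ContDiffAt ℝ ∞ G x := fun x hx => hG.contDiffAt (hS.mem_nhds hx)
  let e₀ := (hGat a ha).toOpenPartialHomeomorph G hG' (by simp)
  have he₀ : (e₀ : X → Y) = G := rfl
  have hc : ContinuousOn (fderiv ℝ G) S := hG.continuousOn_fderiv_of_isOpen hS (by simp)
  let T := S ∩ fderiv ℝ G ⁻¹' interior (Set.range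
    (ContinuousLinearEquiv.toContinuousLinearMap : (X ≃L[ℝ] Y) → X →L[ℝ] Y))
  have hT : IsOpen T := hc.isOpen_inter_preimage hS isOpen_interior
  have haT : a ∈ T := ⟨ha, by
    rw [Set.mem_preimage, hG'.fderiv, mem_interior_iff_mem_nhds]
    exact G'.nhds⟩
  refine ⟨e₀.restrOpen T hT, ⟨(hGat a ha).mem_toOpenPartialHomeomorph_source hG' (by simp), haT⟩,
    fun x hx => hx.2.1, rfl, fun y hy => ContDiffAt.contDiffWithinAt ?_⟩
  have hs := (e₀.restrOpen T hT).map_target hy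
  set x := (e₀.restrOpen T hT).symm y
  obtain ⟨L, hL⟩ := interior_subset hs.2.2
  have hx := hGat x hs.2.1
  refine (e₀.restrOpen T hT).contDiffAt_symm hy (f₀' := L) ?_ hx
  rw [hL]
  exact (hx.differentiableAt (by simp)).hasFDerivAt

end InverseFunction

section Extension

/-- A smooth nonvanishing function near a point agrees near it with a globally smooth
nonvanishing one. -/
theorem exists_contDiff_ne_zero_eqOn {E : Type*} [NormedAddCommGroup E] [NormedSpace ℝ E]
    [HasContDiffBump E] {D : Set E} (hD : IsOpen D) {v : E → ℝ} (hv : ContDiffOn ℝ ∞ v D)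
    {q : E} (hq : q ∈ D) (hvq : v q ≠ 0) :
    ∃ (w : E → ℝ) (D' : Set E), ContDiff ℝ ∞ w ∧ (∀ x, w x ≠ 0) ∧ IsOpen D' ∧ q ∈ D' ∧
      D' ⊆ D ∧ Set.EqOn w v D' := by
  have hs : ∀ᶠ x in 𝓝 q, x ∈ D ∧ |v x - v q| < |v q| := by
    refine (hD.eventually_mem hq).and ?_
    have hc : ContinuousAt (fun x => |v x - v q|) q :=
      ((hv.continuousOn.continuousAt (hD.mem_nhds hq)).sub continuousAt_const).abs
    exact hc.eventually_lt continuousAt_const (by simpa using hvq)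
  obtain ⟨r, hr, hball⟩ := Metric.nhds_basis_closedBall.mem_iff.1 hs
  let f : ContDiffBump q := ⟨r / 2, r, by positivity, by linarith⟩
  refine ⟨fun x => v q + f x * (v x - v q), Metric.ball q (r / 2), ?_, ?_, Metric.isOpen_ball,
    Metric.mem_ball_self (by positivity), ?_, ?_⟩
  · rw [contDiff_iff_contDiffAt]
    intro x
    by_cases hx : x ∈ Metric.closedBall q r
    · have hxv := hv.contDiffAt (hD.mem_nhds (hball hx).1)
      exact contDiffAt_const.add (f.contDiff.contDiffAt.mul (hxv.sub contDiffAt_const))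
    · have hz : f =ᶠ[𝓝 x] 0 := by
        rw [← notMem_tsupport_iff_eventuallyEq, f.tsupport_eq]
        exact hx
      refine (contDiffAt_const (c := v q)).congr_of_eventuallyEq ?_
      filter_upwards [hz] with y hy
      simp [hy]
  · intro x h
    by_cases hx : x ∈ Metric.closedBall q r
    · have h1 := (hball hx).2
      have h2 : |f x * (v x - v q)| ≤ |v x - v q| := by
        rw [abs_mul, abs_of_nonneg f.nonneg]
        exact mul_le_of_le_one_left (abs_nonneg _) f.le_one
      have h3 : f x * (v x - v q) = - v q := by linarith
      rw [h3, abs_neg] at h2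
      linarith
    · have hz : f x = 0 := f.zero_of_le_dist (by simpa using (not_le.1 hx).le)
      simp [hz, hvq] at h
  · exact fun x hx => (hball (Metric.ball_subset_closedBall
      (Metric.ball_subset_ball (by linarith) hx))).1
  · intro x hx
    have h1 : f x = 1 := f.one_of_mem_closedBall (Metric.ball_subset_closedBall hx)
    simp [h1]

end Extension

section ScalingFlow

variable {E : Type} [NormedAddCommGroup E] [NormedSpace ℝ E]

/-- The primitive vanishing at `0`, as an operator on continuous curves over `[0, 1]`. -/
noncomputable def primitive (E : Type) [NormedAddCommGroup E] [NormedSpace ℝ E] :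
    C(I, E) →L[ℝ] C(I, E) :=
  LinearMap.mkContinuous
    { toFun := fun g =>
        ⟨fun t => ∫ s in (0 : ℝ)..t, Set.IccExtend zero_le_one g s,
          (intervalIntegral.continuous_primitive
            (fun _ _ => g.continuous.Icc_extend'.intervalIntegrable _ _) 0).comp
            continuous_subtype_val⟩
      map_add' := fun f g => by
        ext t
        exact intervalIntegral.integral_add (f.continuous.Icc_extend'.intervalIntegrable _ _)
          (g.continuous.Icc_extend'.intervalIntegrable _ _)
      map_smul' := fun c g => by
        ext t
        exact intervalIntegral.integral_smul c _ }
    1 (fun g => by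
      rw [one_mul, ContinuousMap.norm_le _ (norm_nonneg g)]
      intro t
      refine (intervalIntegral.norm_integral_le_of_norm_le_const
        (fun x _ => g.norm_coe_le_norm _)).trans ?_
      refine mul_le_of_le_one_right (norm_nonneg g) ?_
      rw [sub_zero, abs_of_nonneg t.2.1]
      exact t.2.2)

theorem primitive_apply (g : C(I, E)) (t : I) :
    primitive E g t = ∫ s in (0 : ℝ)..t, Set.IccExtend zero_le_one g s := rfl

/-- The curve `s ↦ W (s, γ s)` of velocities prescribed by a time-dependent vector field `W`. -/
def velocity (W : C(ℝ × E, E)) (γ : C(I, E)) : C(I, E) :=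
  ⟨fun s => W ((s : ℝ), γ s), by fun_prop⟩

theorem velocity_eq_superposition (W : C(ℝ × E, E)) :
    velocity W = fun γ : C(I, E) => W.comp
      ((ContinuousLinearMap.inr ℝ ℝ E).compLeftContinuous ℝ I γ +
        ⟨fun s : I => ((s : ℝ), (0 : E)), by fun_prop⟩) := by
  ext γ s
  simp [velocity]

theorem hasFDerivAt_velocity_zero {W : C(ℝ × E, E)} (hW : ContDiff ℝ ∞ W) {γ : C(I, E)}
    (hγ : ∀ s : I, fderiv ℝ W ((s : ℝ), γ s) = 0) :
    HasFDerivAt (velocity W) (0 : C(I, E) →L[ℝ] C(I, E)) γ := by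
  rw [velocity_eq_superposition]
  have hA := ((ContinuousLinearMap.inr ℝ ℝ E).compLeftContinuous ℝ I).hasFDerivAt (x := γ)
    |>.add_const ⟨fun s : I => ((s : ℝ), (0 : E)), by fun_prop⟩
  refine ((hasFDerivAt_superposition (K := I)
    (fun x => (hW.differentiable (by simp) x).hasFDerivAt) hW.continuous
    (hW.continuous_fderiv (by simp)) _).comp γ hA).congr_fderiv ?_
  refine ContinuousLinearMap.ext fun g => ContinuousMap.ext fun s => ?_
  simp [pointwiseApply_apply, hγ s]

theorem contDiff_velocity {W : C(ℝ × E, E)} (hW : ContDiff ℝ ∞ W) :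
    ContDiff ℝ ∞ (velocity W) := by
  rw [velocity_eq_superposition]
  exact (contDiff_superposition (K := I) hW).comp
    (((ContinuousLinearMap.inr ℝ ℝ E).compLeftContinuous ℝ I).contDiff.add contDiff_const)

/-- Rescaling of time `s ↦ lam * s` in a curve, combined with a linear map of the values. -/
def rescale (L : E →L[ℝ] E) (lam : I) (γ : C(I, E)) : C(I, E) :=
  ⟨fun s => L (γ (lam * s)), by fun_prop⟩

theorem rescale_sub_primitive [CompleteSpace E] {W : C(ℝ × E, E)} {L : E →L[ℝ] E} {lam : I}
    (hL : ∀ (s : ℝ) (u : E), W (s, L u) = (lam : ℝ) • L (W (lam * s, u)))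
    {γ : C(I, E)} {u : E}
    (hγ : γ - primitive E (velocity W γ) = ContinuousLinearMap.const ℝ I u) :
    rescale L lam γ - primitive E (velocity W (rescale L lam γ)) =
      ContinuousLinearMap.const ℝ I (L u) := by
  ext t
  have h := congrArg L (DFunLike.congr_fun hγ (lam * t))
  simp only [ContinuousMap.sub_apply, map_sub, primitive_apply] at h ⊢
  have key : ∫ s in (0 : ℝ)..t, Set.IccExtend zero_le_one (velocity W (rescale L lam γ)) s =
      L (∫ s in (0 : ℝ)..((lam * t : I) : ℝ), Set.IccExtend zero_le_one (velocity W γ) s) := by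
    have hcont : Continuous (Set.IccExtend (zero_le_one' ℝ) (velocity W γ)) :=
      (velocity W γ).continuous.Icc_extend'
    have h1 : ((lam * t : I) : ℝ) = (lam : ℝ) * t := rfl
    have h2 := intervalIntegral.smul_integral_comp_mul_left (a := 0) (b := (t : ℝ))
      (Set.IccExtend (zero_le_one' ℝ) (velocity W γ)) lam
    rw [mul_zero] at h2
    rw [h1, ← h2, map_smul, ← L.intervalIntegral_comp_comm
      (Continuous.intervalIntegrable (by fun_prop) _ _),
      ← intervalIntegral.integral_smul]
    refine intervalIntegral.integral_congr fun s hs => ?_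
    rw [Set.uIcc_of_le t.2.1] at hs
    have hsI : s ∈ I := ⟨hs.1, hs.2.trans t.2.2⟩
    have hls : (lam : ℝ) * s ∈ I := (lam * ⟨s, hsI⟩ : I).2
    rw [Set.IccExtend_of_mem _ _ hsI]
    simp only [Set.IccExtend_of_mem _ _ hls]
    exact hL s _
  rw [key]
  exact h

/-- If the linear maps `A + lam • P` rescale solutions of the time-dependent vector field `W`,
which vanishes to second order at the state `c`, then the time-one flow `Ψ` of `W` near `c`
conjugates the linear field `P` to `P + W (1, ·)`. -/
theorem exists_conjugacy_of_scaling [CompleteSpace E] {W : C(ℝ × E, E)} (hW : ContDiff ℝ ∞ W)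
    {c : E} (hc : ∀ s, W (s, c) = 0) (hc' : ∀ s, fderiv ℝ W (s, c) = 0)
    {A P : E →L[ℝ] E} (hAP : A + P = ContinuousLinearMap.id ℝ E)
    (hAc : ∀ lam : ℝ, (A + lam • P) c = c) (hnorm : ∀ lam ∈ I, ‖A + lam • P‖ ≤ 1)
    (hscale : ∀ (lam s : ℝ) (u : E),
      W (s, (A + lam • P) u) = lam • (A + lam • P) (W (lam * s, u))) :
    ∃ (O : Set E) (Ψ : E → E), IsOpen O ∧ c ∈ O ∧ ContDiffOn ℝ ∞ Ψ O ∧ Ψ c = c ∧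
      HasFDerivAt Ψ (ContinuousLinearMap.id ℝ E) c ∧
      ∀ u ∈ O, fderiv ℝ Ψ u (P u) = P (Ψ u) + W (1, Ψ u) := by
  let κ : E →L[ℝ] C(I, E) := ContinuousLinearMap.const ℝ I
  let G : C(I, E) → C(I, E) := fun γ => γ - primitive E (velocity W γ)
  have hG : ContDiff ℝ ∞ G :=
    contDiff_id.sub ((primitive E).contDiff.comp (contDiff_velocity hW))
  have hGc : G (κ c) = κ c := by
    have h : velocity W (κ c) = 0 := by
      ext s
      exact hc s
    simp [G, h]
  have hG' : HasFDerivAt G (ContinuousLinearEquiv.refl ℝ C(I, E) : C(I, E) →L[ℝ] C(I, E))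
      (κ c) := by
    have h : HasFDerivAt G _ (κ c) := (hasFDerivAt_id (κ c)).sub
      ((primitive E).hasFDerivAt.comp (κ c) (hasFDerivAt_velocity_zero hW (fun s => hc' s)))
    refine h.congr_fderiv ?_
    refine ContinuousLinearMap.ext fun g => ?_
    simp
  obtain ⟨e₀, hce₀, -, he₀, hsymm₀⟩ := exists_openPartialHomeomorph_contDiffOn_symm isOpen_univ
    hG.contDiffOn (Set.mem_univ _) hG'
  obtain ⟨ε, hε, hball⟩ := Metric.isOpen_iff.1 e₀.open_source _ hce₀
  let e := e₀.restrOpen (Metric.ball (κ c) ε) Metric.isOpen_ball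
  have he : ∀ γ, e γ = G γ := fun γ => congrFun he₀ γ
  have hes : e.source = Metric.ball (κ c) ε := Set.inter_eq_right.2 hball
  have hsymm : ContDiffOn ℝ ∞ e.symm e.target := hsymm₀.mono Set.inter_subset_left
  have hcs : κ c ∈ e.source := hes ▸ Metric.mem_ball_self hε
  have hct : κ c ∈ e.target := by
    have h := e.map_source hcs
    rwa [he, hGc] at h
  have hcsymm : e.symm (κ c) = κ c := by
    have h := e.left_inv hcs
    rwa [he, hGc] at h
  let ev : C(I, E) →L[ℝ] E := ContinuousMap.evalCLM ℝ (1 : I)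
  have hO : IsOpen (κ ⁻¹' e.target) := e.open_target.preimage κ.continuous
  have hΨ : ContDiffOn ℝ ∞ (fun u => ev (e.symm (κ u))) (κ ⁻¹' e.target) :=
    ev.contDiff.comp_contDiffOn (hsymm.comp κ.contDiff.contDiffOn fun _ hu => hu)
  refine ⟨κ ⁻¹' e.target, fun u => ev (e.symm (κ u)), hO, hct, hΨ, ?_, ?_, fun u hu => ?_⟩
  · simp only [hcsymm]
    rfl
  · have h : HasFDerivAt e (ContinuousLinearEquiv.refl ℝ C(I, E) : C(I, E) →L[ℝ] C(I, E))
        (e.symm (κ c)) := by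
      rw [hcsymm, show (e : C(I, E) → C(I, E)) = G from funext he]
      exact hG'
    have h' := e.hasFDerivAt_symm hct h
    exact ev.hasFDerivAt.comp c (h'.comp c κ.hasFDerivAt)
  · set γ := e.symm (κ u) with hγ_def
    have hγs : γ ∈ e.source := e.map_target hu
    have hGγ : G γ = κ u := by rw [← he, hγ_def, e.right_inv hu]
    let g : ℝ → E := Set.IccExtend (zero_le_one' ℝ) (velocity W γ)
    have hg : Continuous g := (velocity W γ).continuous.Icc_extend'
    have hg1 : g 1 = W (1, γ 1) := Set.IccExtend_right _ _
    let y : ℝ → E := fun t => u + ∫ s in (0 : ℝ)..t, g s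
    have hy : HasDerivAt y (g 1) 1 :=
      (hg.integral_hasStrictDerivAt 0 1).hasDerivAt.const_add u
    have hyγ : ∀ t : I, γ t = y t := fun t =>
      eq_add_of_sub_eq (DFunLike.congr_fun hGγ t)
    have hcurve : ∀ lam ∈ I, ev (e.symm (κ (A u + lam • P u))) = A (y lam) + lam • P (y lam) := by
      intro lam hlam
      have hG' : G (rescale (A + lam • P) ⟨lam, hlam⟩ γ) = κ (A u + lam • P u) :=
        rescale_sub_primitive (hscale lam) hGγ
      have hmem : rescale (A + lam • P) ⟨lam, hlam⟩ γ ∈ e.source := by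
        rw [hes, Metric.mem_ball, dist_eq_norm] at hγs ⊢
        refine lt_of_le_of_lt ?_ hγs
        rw [ContinuousMap.norm_le _ (norm_nonneg _)]
        intro s
        have h : (rescale (A + lam • P) ⟨lam, hlam⟩ γ - κ c) s =
            (A + lam • P) ((γ - κ c) (⟨lam, hlam⟩ * s)) := by
          rw [ContinuousMap.sub_apply, ContinuousMap.sub_apply, map_sub]
          exact congrArg₂ _ rfl (hAc lam).symm
        rw [h]
        refine ((A + lam • P).le_of_opNorm_le (hnorm lam hlam) _).trans ?_
        rw [one_mul]
        exact ContinuousMap.norm_coe_le_norm _ _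
      have h := e.left_inv hmem
      rw [he, hG'] at h
      rw [h]
      change (A + lam • P) (γ (⟨lam, hlam⟩ * 1)) = _
      rw [mul_one, hyγ]
      rfl
    have h1 : HasDerivAt (fun lam : ℝ => A (y lam) + lam • P (y lam))
        (P (γ 1) + W (1, γ 1)) 1 := by
      have h := (A.hasFDerivAt.comp_hasDerivAt 1 hy).add
        ((hasDerivAt_id (1 : ℝ)).smul (P.hasFDerivAt.comp_hasDerivAt 1 hy))
      refine h.congr_deriv ?_
      have hid : A (g 1) + P (g 1) = g 1 := DFunLike.congr_fun hAP (g 1)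
      have hy1 : y 1 = γ 1 := (hyγ 1).symm
      simp only [Function.comp_apply, id, one_smul, hy1]
      rw [← hg1, ← add_assoc, hid, add_comm]
    have hu1 : A u + (1 : ℝ) • P u = u := by
      rw [one_smul]
      exact DFunLike.congr_fun hAP u
    have h2 : HasDerivAt (fun lam : ℝ => ev (e.symm (κ (A u + lam • P u))))
        (fderiv ℝ (fun u => ev (e.symm (κ u))) u (P u)) 1 := by
      have hd : HasFDerivAt (fun u => ev (e.symm (κ u)))
          (fderiv ℝ (fun u => ev (e.symm (κ u))) u) (A u + (1 : ℝ) • P u) := by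
        rw [hu1]
        exact ((hΨ.contDiffAt (hO.mem_nhds hu)).differentiableAt (by simp)).hasFDerivAt
      have hl : HasDerivAt (fun lam : ℝ => A u + lam • P u) (P u) 1 := by
        simpa using ((hasDerivAt_id (1 : ℝ)).smul_const (P u)).const_add (A u)
      exact hd.comp_hasDerivAt 1 hl
    have h1I : (1 : ℝ) ∈ I := ⟨zero_le_one, le_rfl⟩
    exact (uniqueDiffOn_Icc zero_lt_one 1 h1I).eq_deriv _ h2.hasDerivWithinAt
      (h1.hasDerivWithinAt.congr_of_mem hcurve h1I)

end ScalingFlow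

section Node

theorem ContDiff.d1 {v : ℝ × ℝ → ℝ} (hv : ContDiff ℝ ∞ v) : ContDiff ℝ ∞ (d1 v) :=
  (hv.fderiv_right (m := ∞) (by simp)).clm_apply contDiff_const

theorem ContDiff.d2 {v : ℝ × ℝ → ℝ} (hv : ContDiff ℝ ∞ v) : ContDiff ℝ ∞ (d2 v) :=
  (hv.fderiv_right (m := ∞) (by simp)).clm_apply contDiff_const

/-- The field governing `(a, y, r)` along the curves `x = s a`, `p = s r` which are, as `s` varies,
orbits of `(x v, 2 x² v p, M)`. -/
noncomputable def blowupField (v : ℝ × ℝ → ℝ) (t : ℝ × ℝ × ℝ × ℝ) : ℝ × ℝ × ℝ :=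
  (0, t.2.2.2 * (2 * t.1 ^ 2 * t.2.1 ^ 2),
    t.2.2.2 *
      ((v (t.1 * t.2.1, t.2.2.1) ^ 2 - t.1 * t.2.1 * v (t.1 * t.2.1, t.2.2.1) *
          d1 v (t.1 * t.2.1, t.2.2.1)) * t.1 * t.2.2.2 ^ 2 -
        2 * (d2 v (t.1 * t.2.1, t.2.2.1) / v (t.1 * t.2.1, t.2.2.1)) * t.1 ^ 2 * t.2.1 ^ 2 *
          t.2.2.2 -
        2 * (d1 v (t.1 * t.2.1, t.2.2.1) / v (t.1 * t.2.1, t.2.2.1)) * t.2.1))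

theorem contDiff_blowupField {v : ℝ × ℝ → ℝ} (hv : ContDiff ℝ ∞ v) (hv0 : ∀ q, v q ≠ 0) :
    ContDiff ℝ ∞ (blowupField v) := by
  have h1 := hv.d1
  have h2 := hv.d2
  unfold blowupField
  fun_prop (disch := intros; apply hv0)

theorem hasFDerivAt_mul_of_eq_zero {E : Type*} [NormedAddCommGroup E] [NormedSpace ℝ E]
    {f g : E → ℝ} {x : E} (hf : DifferentiableAt ℝ f x) (hg : DifferentiableAt ℝ g x)
    (hfx : f x = 0) (hgx : g x = 0) :
    HasFDerivAt (fun y => f y * g y) (0 : E →L[ℝ] ℝ) x :=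
  (hf.hasFDerivAt.mul hg.hasFDerivAt).congr_fderiv (by simp [hfx, hgx])

theorem hasFDerivAt_blowupField {v : ℝ × ℝ → ℝ} (hv : ContDiff ℝ ∞ v) (hv0 : ∀ q, v q ≠ 0)
    (s y : ℝ) :
    HasFDerivAt (blowupField v) (0 : ℝ × ℝ × ℝ × ℝ →L[ℝ] ℝ × ℝ × ℝ) (s, 0, y, 0) := by
  have hv' := hv.differentiable (by simp)
  have h1 := hv.d1.differentiable (by simp)
  have h2 := hv.d2.differentiable (by simp)
  have hy := hasFDerivAt_mul_of_eq_zero (x := ((s, 0, y, 0) : ℝ × ℝ × ℝ × ℝ))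
    (f := fun t => t.2.2.2) (g := fun t => 2 * t.1 ^ 2 * t.2.1 ^ 2)
    (by fun_prop) (by fun_prop) rfl (by simp)
  have hr := hasFDerivAt_mul_of_eq_zero (x := ((s, 0, y, 0) : ℝ × ℝ × ℝ × ℝ))
    (f := fun t => t.2.2.2) (g := fun t =>
      (v (t.1 * t.2.1, t.2.2.1) ^ 2 - t.1 * t.2.1 * v (t.1 * t.2.1, t.2.2.1) *
          d1 v (t.1 * t.2.1, t.2.2.1)) * t.1 * t.2.2.2 ^ 2 -
        2 * (d2 v (t.1 * t.2.1, t.2.2.1) / v (t.1 * t.2.1, t.2.2.1)) * t.1 ^ 2 * t.2.1 ^ 2 *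
          t.2.2.2 -
        2 * (d1 v (t.1 * t.2.1, t.2.2.1) / v (t.1 * t.2.1, t.2.2.1)) * t.2.1)
    (by fun_prop) (by fun_prop (disch := intros; apply hv0)) rfl (by simp)
  exact ((hasFDerivAt_const (0 : ℝ) _).prodMk (hy.prodMk hr)).congr_fderiv (by ext <;> simp)

/-- The projection `(x, y, p) ↦ (x, 0, p)`. -/
def nodeProj : ℝ × ℝ × ℝ →L[ℝ] ℝ × ℝ × ℝ :=
  (ContinuousLinearMap.fst ℝ ℝ (ℝ × ℝ)).prod
    ((0 : ℝ × ℝ × ℝ →L[ℝ] ℝ).prod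
      ((ContinuousLinearMap.snd ℝ ℝ ℝ).comp (ContinuousLinearMap.snd ℝ ℝ (ℝ × ℝ))))

theorem nodeProj_apply (u : ℝ × ℝ × ℝ) : nodeProj u = (u.1, 0, u.2.2) := rfl

theorem scaling_nodeProj_apply (lam : ℝ) (u : ℝ × ℝ × ℝ) :
    (ContinuousLinearMap.id ℝ (ℝ × ℝ × ℝ) - nodeProj + lam • nodeProj) u =
      (lam * u.1, u.2.1, lam * u.2.2) := by
  ext <;> simp [nodeProj_apply]

theorem exists_conjugacy_blowupField {v : ℝ × ℝ → ℝ} (hv : ContDiff ℝ ∞ v)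
    (hv0 : ∀ q, v q ≠ 0) (ys : ℝ) :
    ∃ (O : Set (ℝ × ℝ × ℝ)) (Ψ : ℝ × ℝ × ℝ → ℝ × ℝ × ℝ), IsOpen O ∧ (0, ys, 0) ∈ O ∧
      ContDiffOn ℝ ∞ Ψ O ∧ Ψ (0, ys, 0) = (0, ys, 0) ∧
      HasFDerivAt Ψ (ContinuousLinearMap.id ℝ (ℝ × ℝ × ℝ)) (0, ys, 0) ∧
      ∀ u ∈ O, fderiv ℝ Ψ u (nodeProj u) = nodeProj (Ψ u) + blowupField v (1, Ψ u) := by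
  have hW := contDiff_blowupField hv hv0
  refine exists_conjugacy_of_scaling (W := ⟨blowupField v, hW.continuous⟩) hW
    (A := ContinuousLinearMap.id ℝ (ℝ × ℝ × ℝ) - nodeProj) ?_ ?_ ?_ ?_ ?_ ?_
  · intro s
    simp [blowupField]
  · exact fun s => (hasFDerivAt_blowupField hv hv0 s ys).fderiv
  · simp
  · intro lam
    rw [scaling_nodeProj_apply]
    simp
  · intro lam hlam
    refine ContinuousLinearMap.opNorm_le_bound _ zero_le_one fun u => ?_
    rw [scaling_nodeProj_apply, one_mul]
    have h : ∀ b : ℝ, |lam * b| ≤ |b| := fun b => by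
      rw [abs_mul, abs_of_nonneg hlam.1]
      exact mul_le_of_le_one_left (abs_nonneg b) hlam.2
    simp only [Prod.norm_def, Real.norm_eq_abs]
    exact max_le_max (h _) (max_le_max le_rfl (h _))
  · intro lam s u
    rw [scaling_nodeProj_apply, scaling_nodeProj_apply]
    have h : s * (lam * u.1) = lam * s * u.1 := by ring
    simp only [ContinuousMap.coe_mk, blowupField, h, Prod.smul_mk, smul_eq_mul]
    refine Prod.ext (by simp) (Prod.ext ?_ ?_)
    · ring
    · ring

/-- The coordinate change `(x, y, p) ↦ (x, p, y)`. -/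
def swapLast : ℝ × ℝ × ℝ →L[ℝ] ℝ × ℝ × ℝ :=
  (ContinuousLinearMap.fst ℝ ℝ (ℝ × ℝ)).prod
    (((ContinuousLinearMap.snd ℝ ℝ ℝ).comp (ContinuousLinearMap.snd ℝ ℝ (ℝ × ℝ))).prod
      ((ContinuousLinearMap.fst ℝ ℝ ℝ).comp (ContinuousLinearMap.snd ℝ ℝ (ℝ × ℝ))))

theorem swapLast_apply (u : ℝ × ℝ × ℝ) : swapLast u = (u.1, u.2.2, u.2.1) := rfl

theorem swapLast_swapLast (u : ℝ × ℝ × ℝ) : swapLast (swapLast u) = u := rfl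

end Node

/-- Almost-Riemannian metric with orthonormal frame `∂/∂x`, `2x v⁻¹ ∂/∂y`: at a singular
point `(0, y*, 0)` the germ of `V = (xv, 2x²vp, M)` is `C^∞`-smoothly orbitally
equivalent to `ξ̇ = ξ, η̇ = η, ζ̇ = 0` (a bicritical node times a trivial factor). -/
theorem stmt19 (D : Set (ℝ × ℝ)) (hD : IsOpen D)
    (v : ℝ × ℝ → ℝ) (hv : ContDiffOn ℝ (⊤ : ℕ∞) v D)
    (hv0 : ∀ q ∈ D, v q ≠ 0)
    (M : ℝ × ℝ × ℝ → ℝ)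
    (hM : M = fun z =>
      (v (z.1, z.2.1) ^ 3 - z.1 * v (z.1, z.2.1) ^ 2 * d1 v (z.1, z.2.1)) * z.2.2 ^ 3 -
      2 * z.1 ^ 2 * d2 v (z.1, z.2.1) * z.2.2 ^ 2 +
      (v (z.1, z.2.1) - 2 * z.1 * d1 v (z.1, z.2.1)) * z.2.2)
    (V : ℝ × ℝ × ℝ → ℝ × ℝ × ℝ)
    (hV : V = fun z => (z.1 * v (z.1, z.2.1), 2 * z.1 ^ 2 * v (z.1, z.2.1) * z.2.2, M z))
    (ys : ℝ) (hq : ((0 : ℝ), ys) ∈ D) :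
    V ((0 : ℝ), ys, (0 : ℝ)) = 0 ∧
    OrbEquiv {z : ℝ × ℝ × ℝ | (z.1, z.2.1) ∈ D} V
      (fun y : ℝ × ℝ × ℝ => (y.1, y.2.1, (0 : ℝ))) ((0 : ℝ), ys, (0 : ℝ)) 0 := by
  refine ⟨by simp [hV, hM], ?_⟩
  obtain ⟨w, D', hw, hw0, hD', hqD', hDD', hwv⟩ :=
    exists_contDiff_ne_zero_eqOn hD hv hq (hv0 _ hq)
  obtain ⟨O, Ψ, hO, hcO, hΨ, hΨc, hΨ', hconj⟩ := exists_conjugacy_blowupField hw hw0 ys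
  obtain ⟨e, hce, heO, he, hsymm⟩ := exists_openPartialHomeomorph_contDiffOn_symm hO hΨ hcO
    (G' := ContinuousLinearEquiv.refl ℝ (ℝ × ℝ × ℝ)) hΨ'
  have hfd : ∀ q ∈ D', fderiv ℝ w q = fderiv ℝ v q := fun q hq' =>
    (hwv.eventuallyEq_of_mem (hD'.mem_nhds hq')).fderiv_eq
  have hVw : ∀ z : ℝ × ℝ × ℝ, (z.1, z.2.1) ∈ D' →
      V z = v (z.1, z.2.1) • (nodeProj z + blowupField w (1, z)) := by
    intro z hz
    have h0 := hv0 _ (hDD' hz)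
    have h1 : d1 w (z.1, z.2.1) = d1 v (z.1, z.2.1) := by rw [d1, d1, hfd _ hz]
    have h2 : d2 w (z.1, z.2.1) = d2 v (z.1, z.2.1) := by rw [d2, d2, hfd _ hz]
    simp only [hV, hM, nodeProj_apply, blowupField, one_mul, h1, h2, hwv hz, Prod.mk_add_mk,
      Prod.smul_mk, smul_eq_mul]
    refine Prod.ext (by simp only; ring) (Prod.ext (by simp only; ring) ?_)
    field_simp
    ring
  let T : Set (ℝ × ℝ × ℝ) := {z | (z.1, z.2.1) ∈ D'}
  have hT : IsOpen T := hD'.preimage (by fun_prop)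
  let f := e.symm.restrOpen T hT
  have hfsub : f.source ⊆ e.target := fun z hz => hz.1
  have hfsm : ContDiffOn ℝ ∞ f f.source := hsymm.mono hfsub
  have hfinv : ContDiffOn ℝ ∞ f.symm f.target := by
    change ContDiffOn ℝ ∞ e f.target
    rw [he]
    exact hΨ.mono fun u hu => heO hu.1
  have hcf : ((0 : ℝ), ys, (0 : ℝ)) ∈ f.source := by
    refine ⟨?_, hqD'⟩
    have h := e.map_source hce
    rwa [he, hΨc] at h
  have hfc : f ((0 : ℝ), ys, (0 : ℝ)) = ((0 : ℝ), ys, (0 : ℝ)) := by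
    have h := e.left_inv hce
    rwa [he, hΨc] at h
  let τ : ℝ × ℝ × ℝ := (0, 0, ys)
  let β : ℝ × ℝ × ℝ → ℝ × ℝ × ℝ := fun y => swapLast (y + τ)
  have hβ : ContDiff ℝ ∞ β := swapLast.contDiff.comp (contDiff_id.add contDiff_const)
  have hβα : ∀ u, β (swapLast u - τ) = u := fun u => by
    simp only [β, sub_add_cancel, swapLast_swapLast]
  have hα0 : swapLast (f (0, ys, 0)) - τ = 0 := by
    rw [hfc, swapLast_apply, sub_self]
  have hfD : ∀ z ∈ f.source, HasFDerivAt f (fderiv ℝ f z) z := fun z hz =>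
    ((hfsm.contDiffAt (f.open_source.mem_nhds hz)).differentiableAt (by simp)).hasFDerivAt
  refine ⟨f.source, β ⁻¹' f.target, fun z => swapLast (f z) - τ, fun y => f.symm (β y),
    fun z => v (z.1, z.2.1), f.open_source, f.open_target.preimage hβ.continuous, hcf, ?_,
    fun z hz => hDD' hz.2, (swapLast.contDiff.comp_contDiffOn hfsm).sub contDiffOn_const,
    hfinv.comp hβ.contDiffOn fun _ hy => hy, hα0, ?_, fun y hy => f.map_target hy, ?_, ?_, ?_,
    fun z hz => hv0 _ (hDD' hz.2), ?_⟩
  · rw [← hα0, Set.mem_preimage, hβα]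
    exact f.map_source hcf
  · intro z hz
    rw [Set.mem_preimage, hβα]
    exact f.map_source hz
  · intro z hz
    simp only [hβα]
    exact f.left_inv hz
  · intro y hy
    simp only [f.right_inv hy, β, swapLast_swapLast, add_sub_cancel_right]
  · exact hv.comp (contDiff_fst.prodMk (contDiff_fst.comp contDiff_snd)).contDiffOn
      fun z hz => hDD' hz.2
  · intro z hz
    have huO : f z ∈ O := heO (f.map_source hz).1
    have hΨf : Ψ (f z) = z := by
      rw [← he]
      exact f.left_inv hz
    have hΨd : HasFDerivAt Ψ (fderiv ℝ Ψ (f z)) (f z) :=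
      ((hΨ.contDiffAt (hO.mem_nhds huO)).differentiableAt (by simp)).hasFDerivAt
    have hcomp : HasFDerivAt (f ∘ Ψ) ((fderiv ℝ f z).comp (fderiv ℝ Ψ (f z))) (f z) :=
      HasFDerivAt.comp (f z) (by rw [hΨf]; exact hfD z hz) hΨd
    have hid : HasFDerivAt (f ∘ Ψ) (ContinuousLinearMap.id ℝ (ℝ × ℝ × ℝ)) (f z) := by
      refine (hasFDerivAt_id (f z)).congr_of_eventuallyEq ?_
      filter_upwards [f.open_target.mem_nhds (f.map_source hz)] with u hu
      rw [Function.comp_apply, ← he]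
      exact f.right_inv hu
    have hinv : fderiv ℝ f z (nodeProj z + blowupField w (1, z)) = nodeProj (f z) := by
      have h := hconj (f z) huO
      rw [hΨf] at h
      rw [← h]
      exact DFunLike.congr_fun (hcomp.unique hid) (nodeProj (f z))
    have hΦ : HasFDerivAt (fun z => swapLast (f z) - τ) (swapLast.comp (fderiv ℝ f z)) z :=
      (swapLast.hasFDerivAt.comp z (hfD z hz)).sub_const τ
    rw [hΦ.fderiv, hVw z hz.2, map_smul, ContinuousLinearMap.comp_apply, hinv]
    simp [swapLast_apply, nodeProj_apply, τ]
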